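/- Let f : ℝ → ℝ be continuous, bandlimited to σ rad/s (σ > 0), and satisfy |f(t)| ≤ A/(1+t²) for all t ∈ ℝ and some A > 0. Let α > Aσ, set g(t) = αt + f(t), and h(u) = g⁻¹(u) − u/α. Then for every real p with 1 ≤ p < ∞, the L^p norms satisfy ‖h‖_p = α^{−(1−1/p)}·‖f‖_p, i.e., ‖h‖_p = ‖f‖_p / α^{(p−1)/p}. -/

import Mathlib

/-!
Substituting `u = g t`, where `g t = α t + f t`, gives `h u = t - g t / α = -f t / α`, so
`∫ |h|ᵖ = α⁻ᵖ ∫ |f|ᵖ (α + f') = α¹⁻ᵖ ∫ |f|ᵖ + α⁻ᵖ ∫ |f|ᵖ f'`. The last integrand is the derivative of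
a function of `f` that vanishes at `±∞` with `f`, so its integral is zero
(`integral_deriv_mul_rpow_eq_zero`).

The substitution needs `f` differentiable with `α + f' > 0`, which is Bernstein's inequality with the
sharp constant, `|f'| ≤ A σ` (`bernstein_bandlimited`). It is proved through M. Riesz's interpolation
formula (`bernstein_fourier`): on the band `2π|ξ| ≤ σ` the multiplier `2πξ` coincides with a triangle
wave, whose sine series (`hasSum_triangle`) expresses `f'` as an absolutely convergent combination of
translates of `f`, with coefficients whose absolute values sum to `σ`.
-/

open Real FourierTransform MeasureTheory

/-- A function `f : ℝ → ℝ` is bandlimited to `σ` rad/s if its Fourier transform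
`f̂(ξ) = ∫ f(t) e^{−2πiξt} dt` vanishes whenever `2π|ξ| > σ`. -/
def Bandlimited (σ : ℝ) (f : ℝ → ℝ) : Prop :=
  ∀ ξ : ℝ, σ < 2 * Real.pi * |ξ| → 𝓕 (fun t : ℝ => (f t : ℂ)) ξ = 0

/-- Obtained from the Fourier series of the second Bernoulli polynomial at `x` by removing the
even-indexed terms, which form a quarter of the same series at `2x`. -/
theorem hasSum_odd_cos {x : ℝ} (h0 : 0 ≤ x) (h1 : x ≤ 1 / 2) :
    HasSum (fun k : ℕ => 1 / (2 * (k : ℝ) + 1) ^ 2 * Real.cos (2 * π * (2 * k + 1) * x))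
      (π ^ 2 / 8 - π ^ 2 * x / 2) := by
  -- The second Bernoulli polynomial.
  have B2 : ∀ z : ℝ, (Polynomial.map (algebraMap ℚ ℝ) (Polynomial.bernoulli 2)).eval z
      = z ^ 2 - z + 1 / 6 := by
    intro z
    simp only [Polynomial.bernoulli, Finset.sum_range_succ, Finset.sum_range_zero,
      Polynomial.map_add, Polynomial.map_monomial, Polynomial.eval_add, Polynomial.eval_monomial,
      bernoulli_eq_bernoulli'_of_ne_one zero_ne_one,
      bernoulli_eq_bernoulli'_of_ne_one (by decide : 2 ≠ 1), bernoulli_one, bernoulli'_zero,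
      bernoulli'_two, Polynomial.map_zero, Polynomial.eval_zero]
    norm_num [Nat.choose]
    ring
  have hall := hasSum_one_div_nat_pow_mul_cos one_ne_zero (x := x) ⟨h0, by linarith⟩
  have heven := (hasSum_one_div_nat_pow_mul_cos one_ne_zero (x := 2 * x)
    ⟨by linarith, by linarith⟩).mul_left (1 / 4)
  simp only [mul_one, B2] at hall heven
  set a : ℕ → ℝ := fun n => 1 / (n : ℝ) ^ 2 * Real.cos (2 * π * n * x) with ha
  have ea : (fun n : ℕ => 1 / 4 * (1 / (n : ℝ) ^ 2 * Real.cos (2 * π * n * (2 * x))))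
      = fun k => a (2 * k) := by
    ext n
    simp only [ha]
    push_cast
    rw [show 2 * π * (n : ℝ) * (2 * x) = 2 * π * (2 * n) * x by ring, mul_pow]
    ring
  rw [ea] at heven
  have hs : Summable fun k => a (2 * k + 1) :=
    hall.summable.comp_injective (i := fun k : ℕ => 2 * k + 1) (fun i j h => by simpa using h)
  have ht := tsum_even_add_odd heven.summable hs
  rw [heven.tsum_eq, hall.tsum_eq] at ht
  have ho := hs.hasSum
  convert! ho using 1
  · ext k
    simp [ha]
  · rw [eq_sub_of_add_eq' ht]
    norm_num [Nat.factorial]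
    ring

/-- The Fourier series of the triangle wave, which is linear on `[-π/2, π/2]`. -/
theorem hasSum_triangle {y : ℝ} (h0 : -(π / 2) ≤ y) (h1 : y ≤ π / 2) :
    HasSum (fun k : ℕ => (-1) ^ k / (2 * (k : ℝ) + 1) ^ 2 * Real.sin ((2 * k + 1) * y))
      (π / 4 * y) := by
  have hπ := Real.pi_pos
  have h := hasSum_odd_cos (x := 1 / 4 - y / (2 * π))
    (by rw [sub_nonneg, div_le_iff₀ (by positivity)]; linarith)
    (by rw [sub_le_iff_le_add, ← sub_le_iff_le_add', le_div_iff₀ (by positivity)]; linarith)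
  convert! h using 1
  · ext k
    have e : 2 * π * (2 * (k : ℝ) + 1) * (1 / 4 - y / (2 * π))
        = π / 2 - (2 * k + 1) * y + k * π := by
      field_simp
      ring
    rw [e, Real.cos_add_nat_mul_pi, Real.cos_pi_div_two_sub]
    ring
  · field_simp
    ring

theorem hasSum_odd_sq : HasSum (fun k : ℕ => 1 / (2 * (k : ℝ) + 1) ^ 2) (π ^ 2 / 8) := by
  simpa using hasSum_odd_cos (x := 0) le_rfl (by norm_num)

theorem hasCompactSupport_of_band {φ : ℝ → ℂ} {σ : ℝ}
    (hs : ∀ ξ : ℝ, σ < 2 * π * |ξ| → φ ξ = 0) : HasCompactSupport φ := by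
  refine HasCompactSupport.intro (isCompact_Icc (a := -(σ / (2 * π))) (b := σ / (2 * π))) ?_
  intro ξ hξ
  apply hs
  by_contra hc
  push Not at hc
  apply hξ
  rw [Set.mem_Icc, ← abs_le, le_div_iff₀ (by positivity)]
  linarith

/-- Bernstein's inequality for the Fourier transform of a continuous function `φ` supported in
`2π|ξ| ≤ σ`. With `F = 𝓕 φ`, the proof establishes M. Riesz's interpolation formula
`F' x = ∑ₖ cₖ / 2 * (F (x + τₖ) - F (x - τₖ))`, where `τₖ = (2k+1)π / (2σ)` and `∑ₖ |cₖ| = σ`. -/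
theorem bernstein_fourier {φ : ℝ → ℂ} {σ M : ℝ} (hσ : 0 < σ) (hφ : Continuous φ)
    (hs : ∀ ξ : ℝ, σ < 2 * π * |ξ| → φ ξ = 0) (hM : ∀ x, ‖𝓕 φ x‖ ≤ M) (x : ℝ) :
    ∃ d : ℂ, HasDerivAt (𝓕 φ) d x ∧ ‖d‖ ≤ M * σ := by
  have hπ := Real.pi_pos
  have hcs := hasCompactSupport_of_band hs
  have hint : Integrable φ := hφ.integrable_of_hasCompactSupport hcs
  have hint' : Integrable (fun ξ : ℝ => ξ • φ ξ) :=
    (continuous_id.smul hφ).integrable_of_hasCompactSupport hcs.smul_left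
  refine ⟨_, hasDerivAt_fourier hint hint' x, ?_⟩
  set c : ℕ → ℝ := fun k => 8 * σ / π ^ 2 * ((-1) ^ k / (2 * (k : ℝ) + 1) ^ 2) with hc
  set τ : ℕ → ℝ := fun k => (2 * k + 1) * π / (2 * σ) with hτ
  -- `E w ξ` is the integrand of `𝓕 φ w`.
  set E : ℝ → ℝ → ℂ := fun w ξ => Complex.exp (↑(-2 * π * ξ * w) * Complex.I) • φ ξ with hE
  have hFE : ∀ w, 𝓕 φ w = ∫ ξ, E w ξ := fun w => fourier_real_eq_integral_exp_smul φ w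
  have hEn : ∀ w ξ, ‖E w ξ‖ = ‖φ ξ‖ := fun w ξ => by
    simp only [hE, norm_smul, Complex.norm_exp_ofReal_mul_I, one_mul]
  have hEi : ∀ w, Integrable (E w) := fun w => by
    refine hint.congr' ?_ (.of_forall fun ξ => (hEn w ξ).symm)
    exact Continuous.aestronglyMeasurable (by fun_prop)
  -- The integral of `T k` is the `k`-th term of the interpolation formula.
  set T : ℕ → ℝ → ℂ := fun k ξ => (c k / 2 : ℂ) * (E (x + τ k) ξ - E (x - τ k) ξ) with hT
  have hTi : ∀ k, Integrable (T k) := fun k => ((hEi _).sub (hEi _)).const_mul _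
  have hcsum : HasSum (fun k => |c k|) σ := by
    have := hasSum_odd_sq.mul_left (8 * σ / π ^ 2)
    convert! this using 1
    · ext k
      rw [hc, abs_mul, abs_of_pos (by positivity), abs_div, abs_pow, abs_neg, abs_one, one_pow,
        abs_of_pos (by positivity)]
    · field_simp
  have hTn : ∀ k ξ, ‖T k ξ‖ ≤ |c k| * ‖φ ξ‖ := fun k ξ => by
    simp only [hT, norm_mul, norm_div, Complex.norm_real, Real.norm_eq_abs, Complex.norm_ofNat]
    have := norm_sub_le (E (x + τ k) ξ) (E (x - τ k) ξ)
    rw [hEn, hEn] at this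
    have := mul_le_mul_of_nonneg_left this (show 0 ≤ |c k| / 2 by positivity)
    linarith
  have hTs : Summable fun k => ∫ ξ, ‖T k ξ‖ := by
    refine Summable.of_nonneg_of_le (fun k => by positivity) (fun k => ?_)
      (hcsum.summable.mul_right (∫ ξ, ‖φ ξ‖))
    rw [← integral_const_mul]
    exact integral_mono (hTi k).norm (hint.norm.const_mul _) (hTn k)
  have key := hasSum_integral_of_summable_integral_norm hTi hTs
  -- On the support of `φ`, the argument `π² ξ / σ` lies in `[-π/2, π/2]`, so the triangle-wave
  -- series represents the multiplier `-2πiξ` of differentiation; off the support both sides vanish.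
  have hpt : ∀ ξ : ℝ, ∑' k, T k ξ
      = Complex.exp (↑(-2 * π * ξ * x) * Complex.I) • ((-2 * π * Complex.I * ξ) • φ ξ) := by
    intro ξ
    by_cases h : σ < 2 * π * |ξ|
    · simp [hT, hE, hs ξ h]
    · push Not at h
      have hb : |π ^ 2 * ξ / σ| ≤ π / 2 := by
        rw [abs_div, abs_mul, abs_of_pos hσ, abs_of_pos (by positivity : 0 < π ^ 2),
          div_le_div_iff₀ hσ (by norm_num)]
        nlinarith
      have h1 := (hasSum_triangle (abs_le.1 hb).1 (abs_le.1 hb).2).mul_left (8 * σ / π ^ 2)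
      have h2 := ((Complex.hasSum_ofReal.2 h1).mul_right
        (-Complex.I * E x ξ))
      have e : T = fun (k : ℕ) (ξ : ℝ) => ((8 * σ / π ^ 2 * ((-1) ^ k / (2 * (k : ℝ) + 1) ^ 2 *
          Real.sin ((2 * k + 1) * (π ^ 2 * ξ / σ))) : ℝ) : ℂ) * (-Complex.I * E x ξ) := by
        ext k ξ
        -- The `k`-th frequency is chosen so that the sine becomes a translation by `τ k`.
        have e1 : ((2 * k + 1) * (π ^ 2 * ξ / σ) : ℝ) = 2 * π * ξ * τ k := by
          simp only [hτ]; field_simp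
        rw [e1, ← mul_assoc (8 * σ / π ^ 2)]
        change T k ξ = ((c k * Real.sin (2 * π * ξ * τ k) : ℝ) : ℂ) * (-Complex.I * E x ξ)
        have e2 : ∀ s : ℝ, E (x + s) ξ = Complex.exp (-(↑(2 * π * ξ * s) * Complex.I)) * E x ξ := by
          intro s
          simp only [hE, smul_eq_mul]
          rw [← mul_assoc, ← Complex.exp_add]
          congr 2
          push_cast
          ring
        have e3 := e2 (τ k)
        have e4 := e2 (-τ k)
        rw [← sub_eq_add_neg] at e4
        simp only [hT, e3, e4]
        rw [Complex.ofReal_mul (c k) (Real.sin _), Complex.ofReal_sin, Complex.sin]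
        rw [show -(((2 * π * ξ * -τ k : ℝ) : ℂ) * Complex.I)
          = ((2 * π * ξ * τ k : ℝ) : ℂ) * Complex.I by push_cast; ring, neg_mul]
        linear_combination ((c k / 2 : ℂ) *
          (Complex.exp (-(((2 * π * ξ * τ k : ℝ) : ℂ) * Complex.I)) -
            Complex.exp (((2 * π * ξ * τ k : ℝ) : ℂ) * Complex.I)) * E x ξ) * Complex.I_sq
      rw [e, h2.tsum_eq]
      simp only [hE, smul_eq_mul]
      have e5 : 8 * σ / π ^ 2 * (π / 4 * (π ^ 2 * ξ / σ)) = 2 * π * ξ := by field_simp; ring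
      rw [e5]
      push_cast
      ring
  rw [fourier_real_eq_integral_exp_smul]
  simp only [← hpt]
  rw [← key.tsum_eq]
  have hk : ∀ k, ‖∫ ξ, T k ξ‖ ≤ M * |c k| := fun k => by
    simp only [hT]
    rw [integral_const_mul, integral_sub (hEi _) (hEi _), ← hFE, ← hFE, norm_mul, norm_div,
      Complex.norm_real, Real.norm_eq_abs, Complex.norm_ofNat]
    have := norm_sub_le (𝓕 φ (x + τ k)) (𝓕 φ (x - τ k))
    have := mul_le_mul_of_nonneg_left (this.trans (add_le_add (hM _) (hM _)))
      (show 0 ≤ |c k| / 2 by positivity)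
    linarith
  exact tsum_of_norm_bounded (hcsum.mul_left M) hk

/-- **Bernstein's inequality** with the sharp constant. The Fourier transform of `f` is continuous
with compact support, so Fourier inversion writes `f (-x)` as the Fourier transform of an integrable
band-supported function. -/
theorem bernstein_bandlimited {f : ℝ → ℝ} {σ M : ℝ} (hσ : 0 < σ) (hf : Continuous f) (hi : Integrable f)
    (hbl : Bandlimited σ f) (hM : ∀ t, |f t| ≤ M) :
    Differentiable ℝ f ∧ ∀ t, |deriv f t| ≤ M * σ := by
  have hic : Integrable (fun t : ℝ => (f t : ℂ)) := hi.ofReal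
  have hfc : Continuous (fun t : ℝ => (f t : ℂ)) := by fun_prop
  set φ : ℝ → ℂ := 𝓕 (fun t : ℝ => (f t : ℂ)) with hφ
  have hφc : Continuous φ :=
    VectorFourier.fourierIntegral_continuous Real.continuous_fourierChar continuous_inner hic
  have hcs : HasCompactSupport φ := hasCompactSupport_of_band hbl
  have hinv := hfc.fourierInv_fourier_eq hic (hφc.integrable_of_hasCompactSupport hcs)
  have hF : ∀ x, 𝓕 φ x = f (-x) := fun x => by
    rw [← congrFun hinv (-x), fourierInv_eq_fourier_neg, neg_neg]
  have hmain : ∀ t, ∃ d : ℝ, HasDerivAt f d t ∧ |d| ≤ M * σ := by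
    intro t
    obtain ⟨d, hd, hdn⟩ := bernstein_fourier hσ hφc hbl
      (fun x => by rw [hF, Complex.norm_real]; exact hM _) (-t)
    have h1 : HasDerivAt (fun s : ℝ => (f s : ℂ)) (-d) t := by
      have := HasDerivAt.scomp t hd (hasDerivAt_neg t)
      simpa [Function.comp_def, hF] using this
    have h2 : HasDerivAt f (-d).re t := Complex.reCLM.hasFDerivAt.comp_hasDerivAt t h1
    exact ⟨_, h2, (Complex.abs_re_le_norm _).trans (by rwa [norm_neg])⟩
  refine ⟨fun t => (hmain t).choose_spec.1.differentiableAt, fun t => ?_⟩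
  obtain ⟨d, hd, hb⟩ := hmain t
  rwa [hd.deriv]

theorem integrable_of_decay {f : ℝ → ℝ} {A : ℝ} (hf : Continuous f)
    (hdecay : ∀ t : ℝ, |f t| ≤ A / (1 + t ^ 2)) : Integrable f := by
  refine (integrable_inv_one_add_sq.const_mul A).mono' hf.aestronglyMeasurable
    (.of_forall fun t => ?_)
  simpa [div_eq_mul_inv] using hdecay t

theorem tendsto_zero_of_decay {f : ℝ → ℝ} {A : ℝ}
    (hdecay : ∀ t : ℝ, |f t| ≤ A / (1 + t ^ 2)) :
    Filter.Tendsto f (Filter.cocompact ℝ) (nhds 0) := by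
  refine squeeze_zero_norm hdecay ?_
  have h : Filter.Tendsto (fun t : ℝ => 1 + t ^ 2) (Filter.cocompact ℝ) Filter.atTop := by
    refine Filter.tendsto_atTop_add_const_left _ 1 ?_
    have := (Filter.tendsto_pow_atTop (α := ℝ) two_ne_zero).comp (tendsto_norm_cocompact_atTop (E := ℝ))
    simpa [Function.comp_def] using this
  exact h.const_div_atTop A

/-- The integrand is the derivative of `Φ ∘ f`, where `Φ` is a primitive of `|s| ^ p`, and `Φ ∘ f`
has the same limit `Φ 0` at both ends. -/
theorem integral_deriv_mul_rpow_eq_zero {f : ℝ → ℝ} {p : ℝ} (hp : 0 ≤ p)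
    (hf : Differentiable ℝ f) (hlim : Filter.Tendsto f (Filter.cocompact ℝ) (nhds 0))
    (hint : Integrable fun t => deriv f t * |f t| ^ p) :
    ∫ t, deriv f t * |f t| ^ p = 0 := by
  have hc : Continuous fun s : ℝ => |s| ^ p := continuous_abs.rpow_const fun _ => .inr hp
  set Φ : ℝ → ℝ := fun x => ∫ s in (0 : ℝ)..x, |s| ^ p with hΦ
  have hd : ∀ x, HasDerivAt Φ (|x| ^ p) x := fun x =>
    intervalIntegral.integral_hasDerivAt_right (hc.intervalIntegrable _ _)
      hc.stronglyMeasurable.stronglyMeasurableAtFilter hc.continuousAt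
  have hl : Filter.Tendsto (Φ ∘ f) (Filter.cocompact ℝ) (nhds (Φ 0)) :=
    (hd 0).continuousAt.tendsto.comp hlim
  have := integral_of_hasDerivAt_of_tendsto (f := Φ ∘ f) (f' := fun t => deriv f t * |f t| ^ p)
    (fun t => by
      have := (hd (f t)).comp t (hf t).hasDerivAt
      rwa [mul_comm] at this) hint
    (hl.mono_left atBot_le_cocompact)
    (hl.mono_left atTop_le_cocompact)
  rw [this, sub_self]

/-- The `Lᵖ` norms of `f` and of `h(u) = g⁻¹(u) − u/α` satisfy
`‖h‖_p = ‖f‖_p / α^{(p−1)/p}` for every `1 ≤ p < ∞`. -/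
theorem lp_norm_relation
    (f : ℝ → ℝ) (σ A α : ℝ) (hσ : 0 < σ) (hA : 0 < A)
    (hf : Continuous f) (hbl : Bandlimited σ f)
    (hdecay : ∀ t : ℝ, |f t| ≤ A / (1 + t ^ 2))
    (hα : A * σ < α) :
    ∀ p : ℝ, 1 ≤ p →
      (∫ u : ℝ, |Function.invFun (fun t : ℝ => α * t + f t) u - u / α| ^ p) ^ (1 / p)
        = (∫ t : ℝ, |f t| ^ p) ^ (1 / p) / α ^ ((p - 1) / p) := by
  intro p hp
  have hp0 : 0 < p := by linarith
  have hα0 : 0 < α := lt_trans (by positivity) hα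
  have hfi := integrable_of_decay hf hdecay
  have hfA : ∀ t, |f t| ≤ A := fun t =>
    (hdecay t).trans (div_le_self hA.le (by nlinarith [sq_nonneg t]))
  obtain ⟨hfd, hfb⟩ := bernstein_bandlimited hσ hf hfi hbl hfA
  set g : ℝ → ℝ := fun t => α * t + f t with hg
  have hgd : ∀ t, HasDerivAt g (α + deriv f t) t := fun t => by
    simpa using ((hasDerivAt_id t).const_mul α).fun_add (hfd t).hasDerivAt
  have hpos : ∀ t, 0 < α + deriv f t := fun t => by
    have := (abs_le.1 (hfb t)).1
    linarith
  have hinj : Function.Injective g :=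
    (strictMono_of_hasDerivAt_pos hgd hpos).injective
  have hsurj : Function.Surjective g := by
    have hgc : Continuous g := by fun_prop
    refine hgc.surjective ?_ ?_
    · exact Filter.tendsto_atTop_add_right_of_le _ (-A) (Filter.tendsto_id.const_mul_atTop hα0)
        fun t => (abs_le.1 (hfA t)).1
    · exact Filter.tendsto_atBot_add_right_of_ge _ A (Filter.tendsto_id.const_mul_atBot hα0)
        fun t => (abs_le.1 (hfA t)).2
  have hpi : Integrable fun t => |f t| ^ p := by
    refine (hfi.abs.const_mul (A ^ (p - 1))).mono'
      (continuous_abs.comp hf |>.rpow_const fun _ => .inr hp0.le).aestronglyMeasurable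
      (.of_forall fun t => ?_)
    rw [Real.norm_of_nonneg (by positivity)]
    -- `|f| ^ p ≤ A ^ (p - 1) * |f|`, using `p ≥ 1`.
    rcases (abs_nonneg (f t)).eq_or_lt with h | h
    · rw [← h, Real.zero_rpow hp0.ne', mul_zero]
    · calc |f t| ^ p = |f t| ^ (p - 1) * |f t| := by
            rw [← Real.rpow_add_one h.ne', sub_add_cancel]
        _ ≤ _ := by gcongr; exact hfA t
  have hdi : Integrable fun t => deriv f t * |f t| ^ p :=
    hpi.bdd_mul (measurable_deriv f).aestronglyMeasurable (.of_forall hfb)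
  have hz := integral_deriv_mul_rpow_eq_zero hp0.le hfd (tendsto_zero_of_decay hdecay) hdi
  have hcv := integral_image_eq_integral_abs_deriv_smul MeasurableSet.univ
    (fun x _ => (hgd x).hasDerivWithinAt) hinj.injOn
    (fun u => |Function.invFun g u - u / α| ^ p)
  rw [Set.image_univ, hsurj.range_eq, setIntegral_univ, setIntegral_univ] at hcv
  -- In the variable `u = g t` one has `h u = -f t / α`, and `du = (α + f' t) dt`.
  have hI : ∫ u : ℝ, |Function.invFun g u - u / α| ^ p = (∫ t, |f t| ^ p) * α ^ (1 - p) := by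
    rw [hcv]
    have e : ∀ t, |α + deriv f t| • |Function.invFun g (g t) - g t / α| ^ p
        = α ^ (1 - p) * |f t| ^ p + α ^ (-p) * (deriv f t * |f t| ^ p) := by
      intro t
      rw [Function.leftInverse_invFun hinj t, abs_of_pos (hpos t)]
      have : t - g t / α = -(f t / α) := by simp only [hg]; field_simp; ring
      rw [this, abs_neg, abs_div, abs_of_pos hα0, Real.div_rpow (abs_nonneg _) hα0.le,
        Real.rpow_sub hα0, Real.rpow_neg hα0.le, Real.rpow_one, smul_eq_mul]
      ring
    simp only [e]
    rw [integral_add (hpi.const_mul _) (hdi.const_mul _), integral_const_mul, integral_const_mul,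
      hz]
    ring
  have hnn : 0 ≤ ∫ t, |f t| ^ p := integral_nonneg fun t => by positivity
  rw [hI, Real.mul_rpow hnn (by positivity), ← Real.rpow_mul hα0.le,
    div_eq_mul_inv _ (α ^ ((p - 1) / p)), ← Real.rpow_neg hα0.le]
  congr 2
  ring
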